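/- Let Ω be an open subset of ℝⁿ, let f = (u₁, v₁) and g = (u₂, v₂) be H-continuous pairs on Ω, and let D_fg = { x ∈ Ω : u₁(x) = v₁(x) and u₂(x) = v₂(x) }. Then D_fg is dense in Ω, and the pair (I(D_fg,Ω,(u₁+u₂)|_{D_fg}), S(D_fg,Ω,(v₁+v₂)|_{D_fg})) is H-continuous and satisfies u₁(x) + u₂(x) ≤ I(D_fg,Ω,(u₁+u₂)|_{D_fg})(x) ≤ S(D_fg,Ω,(v₁+v₂)|_{D_fg})(x) ≤ v₁(x) + v₂(x) for all x ∈ Ω; consequently it equals f ⊕ g, the unique H-continuous pair contained pointwise in the interval sum f + g. -/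

import Mathlib

open Set

/-- Points of `ℝⁿ`. -/
abbrev Pt (n : ℕ) := EuclideanSpace ℝ (Fin n)

/-- Lower Baire operator `I(D,Ω,f)(x) = sup_{δ>0} inf { f y : y ∈ B_δ(x) ∩ D }`,
where `B_δ(x) = { y ∈ Ω : ‖y - x‖ < δ }`. -/
noncomputable def Ilow {n : ℕ} (D Om : Set (Pt n)) (f : Pt n → ℝ) (x : Pt n) : ℝ :=
  sSup {a : ℝ | ∃ δ : ℝ, 0 < δ ∧
    a = sInf (f '' {y | y ∈ Om ∧ ‖y - x‖ < δ ∧ y ∈ D})}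

/-- Upper Baire operator `S(D,Ω,f)(x) = inf_{δ>0} sup { f y : y ∈ B_δ(x) ∩ D }`. -/
noncomputable def Shigh {n : ℕ} (D Om : Set (Pt n)) (f : Pt n → ℝ) (x : Pt n) : ℝ :=
  sInf {a : ℝ | ∃ δ : ℝ, 0 < δ ∧
    a = sSup (f '' {y | y ∈ Om ∧ ‖y - x‖ < δ ∧ y ∈ D})}

/-- `f`, defined on `D ⊆ Ω`, is locally bounded relative to `Ω`. -/
def LocBddOn {n : ℕ} (Om D : Set (Pt n)) (f : Pt n → ℝ) : Prop :=
  ∀ x ∈ Om, ∃ δ : ℝ, 0 < δ ∧ ∃ M : ℝ,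
    ∀ y, y ∈ Om → ‖y - x‖ < δ → y ∈ D → |f y| < M

/-- `(u, v)` encodes an interval-valued function `x ↦ [u x, v x]` on `Om`. -/
def IntervalPair {n : ℕ} (Om : Set (Pt n)) (u v : Pt n → ℝ) : Prop :=
  LocBddOn Om Om u ∧ LocBddOn Om Om v ∧ ∀ x ∈ Om, u x ≤ v x

/-- The pair `(u, v)` is S-continuous on `Om`: `I(u) = u` and `S(v) = v`. -/
def SCont {n : ℕ} (Om : Set (Pt n)) (u v : Pt n → ℝ) : Prop :=
  ∀ x ∈ Om, Ilow Om Om u x = u x ∧ Shigh Om Om v x = v x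

/-- The pair `(u, v)` is Hausdorff continuous on `Om`. -/
def HCont {n : ℕ} (Om : Set (Pt n)) (u v : Pt n → ℝ) : Prop :=
  ∀ p q : Pt n → ℝ, LocBddOn Om Om p → LocBddOn Om Om q →
    (∀ x ∈ Om, u x ≤ p x ∧ p x ≤ q x ∧ q x ≤ v x) →
    ∀ x ∈ Om, Ilow Om Om p x = u x ∧ Shigh Om Om q x = v x

/-- `(u, v)` is an H-continuous interval pair on `Om`. -/
def HContPair {n : ℕ} (Om : Set (Pt n)) (u v : Pt n → ℝ) : Prop :=
  IntervalPair Om u v ∧ HCont Om u v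

/-- Lower endpoint of the pointwise interval product. -/
noncomputable def imin {n : ℕ} (u₁ v₁ u₂ v₂ : Pt n → ℝ) (x : Pt n) : ℝ :=
  min (min (u₁ x * u₂ x) (u₁ x * v₂ x)) (min (v₁ x * u₂ x) (v₁ x * v₂ x))

/-- Upper endpoint of the pointwise interval product. -/
noncomputable def imax {n : ℕ} (u₁ v₁ u₂ v₂ : Pt n → ℝ) (x : Pt n) : ℝ :=
  max (max (u₁ x * u₂ x) (u₁ x * v₂ x)) (max (v₁ x * u₂ x) (v₁ x * v₂ x))

/-- `(pl, pu)` is the H-continuous pair contained pointwise in the interval sum of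
`(u₁, v₁)` and `(u₂, v₂)`, i.e. `(pl, pu) = (u₁,v₁) ⊕ (u₂,v₂)`. -/
def IsOplus {n : ℕ} (Om : Set (Pt n)) (u₁ v₁ u₂ v₂ pl pu : Pt n → ℝ) : Prop :=
  HContPair Om pl pu ∧
    ∀ x ∈ Om, u₁ x + u₂ x ≤ pl x ∧ pl x ≤ pu x ∧ pu x ≤ v₁ x + v₂ x

/-- `(ql, qu)` is the H-continuous pair contained pointwise in the interval product of
`(u₁, v₁)` and `(u₂, v₂)`, i.e. `(ql, qu) = (u₁,v₁) ⊗ (u₂,v₂)`. -/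
def IsOtimes {n : ℕ} (Om : Set (Pt n)) (u₁ v₁ u₂ v₂ ql qu : Pt n → ℝ) : Prop :=
  HContPair Om ql qu ∧
    ∀ x ∈ Om, imin u₁ v₁ u₂ v₂ x ≤ ql x ∧ ql x ≤ qu x ∧ qu x ≤ imax u₁ v₁ u₂ v₂ x

def BB {n : ℕ} (Om : Set (Pt n)) (f : Pt n → ℝ) : Prop :=
  ∀ (x : Pt n) (R : ℝ), ∃ M : ℝ, ∀ y ∈ Om, ‖y - x‖ < R → |f y| < M

lemma BB.neg {n : ℕ} {Om : Set (Pt n)} {f : Pt n → ℝ} (h : BB Om f) :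
    BB Om (fun y => - f y) := by
  intro x R
  obtain ⟨M, hM⟩ := h x R
  exact ⟨M, fun y hy hd => by simpa using hM y hy hd⟩

lemma BB.add {n : ℕ} {Om : Set (Pt n)} {f g : Pt n → ℝ} (h : BB Om f) (h' : BB Om g) :
    BB Om (fun y => f y + g y) := by
  intro x R
  obtain ⟨M, hM⟩ := h x R
  obtain ⟨N, hN⟩ := h' x R
  exact ⟨M + N, fun y hy hd => lt_of_le_of_lt (abs_add_le _ _)
    (add_lt_add (hM y hy hd) (hN y hy hd))⟩

lemma BB.between {n : ℕ} {Om : Set (Pt n)} {f g p : Pt n → ℝ} (h : BB Om f) (h' : BB Om g)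
    (hp : ∀ x ∈ Om, f x ≤ p x ∧ p x ≤ g x) : BB Om p := by
  intro x R
  obtain ⟨M, hM⟩ := h x R
  obtain ⟨N, hN⟩ := h' x R
  refine ⟨max M N, fun y hy hd => ?_⟩
  have a := abs_lt.1 (hM y hy hd)
  have b := abs_lt.1 (hN y hy hd)
  have c := hp y hy
  have d := le_max_left M N
  have e := le_max_right M N
  rw [abs_lt]
  constructor <;> linarith

lemma BB.loc {n : ℕ} {Om : Set (Pt n)} {f : Pt n → ℝ} (h : BB Om f) : LocBddOn Om Om f := by
  intro x _
  obtain ⟨M, hM⟩ := h x 1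
  exact ⟨1, one_pos, M, fun y hy hd _ => hM y hy hd⟩

lemma Shigh_eq {n : ℕ} (D Om : Set (Pt n)) (f : Pt n → ℝ) (x : Pt n) :
    Shigh D Om f x = - Ilow D Om (fun y => - f y) x := by
  unfold Shigh Ilow
  rw [Real.sInf_def]
  congr 2
  ext a
  simp only [Set.mem_neg, Set.mem_ofPred_eq]
  refine exists_congr fun δ => and_congr_right fun _ => ?_
  rw [Real.sInf_def]
  have : -((fun y => - f y) '' {y | y ∈ Om ∧ ‖y - x‖ < δ ∧ y ∈ D})
      = f '' {y | y ∈ Om ∧ ‖y - x‖ < δ ∧ y ∈ D} := by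
    ext b
    simp [Set.mem_neg]
  rw [this]
  constructor <;> intro h <;> linarith

lemma of_lt_Ilow {n : ℕ} {D Om : Set (Pt n)} {f : Pt n → ℝ} (hf : BB Om f) {x : Pt n} {c : ℝ}
    (h : c < Ilow D Om f x) :
    ∃ δ : ℝ, 0 < δ ∧ ∀ y ∈ Om, ‖y - x‖ < δ → y ∈ D → c < f y := by
  have hne : {a : ℝ | ∃ δ : ℝ, 0 < δ ∧
    a = sInf (f '' {y | y ∈ Om ∧ ‖y - x‖ < δ ∧ y ∈ D})}.Nonempty := ⟨_, 1, one_pos, rfl⟩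
  obtain ⟨a, ⟨δ, hδ, rfl⟩, hc⟩ := exists_lt_of_lt_csSup hne h
  refine ⟨δ, hδ, fun y hy hd hD => lt_of_lt_of_le hc (csInf_le ?_ ⟨y, ⟨hy, hd, hD⟩, rfl⟩)⟩
  obtain ⟨M, hM⟩ := hf x δ
  refine ⟨-M, ?_⟩
  rintro _ ⟨z, ⟨hz, hd, _⟩, rfl⟩
  exact (abs_lt.1 (hM z hz hd)).1.le

lemma exists_near {n : ℕ} {D Om : Set (Pt n)} (hDO : D ⊆ Om) {x : Pt n} (hx : x ∈ closure D)
    {δ : ℝ} (hδ : 0 < δ) : ∃ y, y ∈ Om ∧ ‖y - x‖ < δ ∧ y ∈ D := by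
  obtain ⟨y, hy, hd⟩ := Metric.mem_closure_iff.1 hx δ hδ
  exact ⟨y, hDO hy, by rwa [dist_comm, dist_eq_norm] at hd, hy⟩

lemma le_Ilow {n : ℕ} {D Om : Set (Pt n)} (hDO : D ⊆ Om) {f : Pt n → ℝ} (hf : BB Om f)
    {x : Pt n} (hx : x ∈ closure D) {c δ : ℝ} (hδ : 0 < δ)
    (h : ∀ y ∈ Om, ‖y - x‖ < δ → y ∈ D → c ≤ f y) : c ≤ Ilow D Om f x := by
  have h1 : c ≤ sInf (f '' {y | y ∈ Om ∧ ‖y - x‖ < δ ∧ y ∈ D}) := by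
    refine le_csInf ?_ ?_
    · obtain ⟨y, hy⟩ := exists_near hDO hx hδ
      exact ⟨f y, Set.mem_image_of_mem f hy⟩
    · rintro _ ⟨z, ⟨hz, hd, hD⟩, rfl⟩
      exact h z hz hd hD
  refine h1.trans (le_csSup ?_ ⟨δ, hδ, rfl⟩)
  obtain ⟨M, hM⟩ := hf x 1
  refine ⟨M, ?_⟩
  rintro _ ⟨η, hη, rfl⟩
  obtain ⟨y, hy, hd, hD⟩ := exists_near hDO hx (lt_min hη one_pos)
  have hmem : f y ∈ f '' {y | y ∈ Om ∧ ‖y - x‖ < η ∧ y ∈ D} :=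
    ⟨y, ⟨hy, hd.trans_le (min_le_left _ _), hD⟩, rfl⟩
  refine (csInf_le ?_ hmem).trans
    (abs_lt.1 (hM y hy (hd.trans_le (min_le_right _ _)))).2.le
  obtain ⟨N, hN⟩ := hf x η
  refine ⟨-N, ?_⟩
  rintro _ ⟨z, ⟨hz, hd, _⟩, rfl⟩
  exact (abs_lt.1 (hN z hz hd)).1.le

lemma of_Shigh_lt {n : ℕ} {D Om : Set (Pt n)} {f : Pt n → ℝ} (hf : BB Om f) {x : Pt n} {c : ℝ}
    (h : Shigh D Om f x < c) :
    ∃ δ : ℝ, 0 < δ ∧ ∀ y ∈ Om, ‖y - x‖ < δ → y ∈ D → f y < c := by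
  rw [Shigh_eq] at h
  obtain ⟨δ, hδ, H⟩ := of_lt_Ilow hf.neg (x := x) (c := -c) (D := D) (by linarith)
  exact ⟨δ, hδ, fun y a b e => by have := H y a b e; linarith⟩

/-- A function equal to its lower Baire function is bounded below on balls. -/
lemma bddBelow_of {n : ℕ} {Om : Set (Pt n)} {u : Pt n → ℝ}
    (hu : ∀ x ∈ Om, Ilow Om Om u x = u x) (z : Pt n) (R : ℝ) :
    ∃ m : ℝ, ∀ y ∈ Om, ‖y - z‖ < R → m ≤ u y := by
  by_contra hcon
  push Not at hcon
  obtain ⟨y, hy, hd, h0⟩ := hcon 0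
  have hR : 0 < R := lt_of_le_of_lt (norm_nonneg _) hd
  have hδ : 0 < R + ‖z - y‖ := by positivity
  have key : (0 : ℝ) ≤ Ilow Om Om u y := by
    refine le_csSup ?_ ⟨R + ‖z - y‖, hδ, ?_⟩
    · refine ⟨max 0 (u y), ?_⟩
      rintro _ ⟨η, hη, rfl⟩
      by_cases hb : BddBelow (u '' {w | w ∈ Om ∧ ‖w - y‖ < η ∧ w ∈ Om})
      · exact (csInf_le hb ⟨y, ⟨hy, by simpa using hη, hy⟩, rfl⟩).trans (le_max_right _ _)
      · rw [Real.sInf_of_not_bddBelow hb]; exact le_max_left _ _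
    · rw [Real.sInf_of_not_bddBelow]
      rintro ⟨m, hm⟩
      obtain ⟨w, hw, hwd, hwm⟩ := hcon m
      have : m ≤ u w := hm ⟨w, ⟨hw, ?_, hw⟩, rfl⟩
      · linarith
      · have := norm_add_le (w - z) (z - y)
        rw [sub_add_sub_cancel] at this
        linarith
  rw [hu y hy] at key
  linarith

lemma HContPair.facts {n : ℕ} {Om : Set (Pt n)} {u v : Pt n → ℝ} (h : HContPair Om u v) :
    BB Om u ∧ BB Om v ∧ ∀ x ∈ Om, u x ≤ v x ∧ Ilow Om Om u x = u x ∧ Shigh Om Om v x = v x ∧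
      Shigh Om Om u x = v x := by
  obtain ⟨⟨hu, hv, huv⟩, H⟩ := h
  have e1 := H u u hu hu (fun x hx => ⟨le_rfl, le_rfl, huv x hx⟩)
  have e2 := H v v hv hv (fun x hx => ⟨huv x hx, le_rfl, le_rfl⟩)
  have b1 := bddBelow_of (fun x hx => (e1 x hx).1)
  have b2 := bddBelow_of (Om := Om) (u := fun y => - v y) (fun x hx => by
    have := (e2 x hx).2
    rw [Shigh_eq] at this
    linarith)
  have key : ∀ p : Pt n → ℝ, (∀ x ∈ Om, u x ≤ p x ∧ p x ≤ v x) → BB Om p := by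
    intro p hp x R
    obtain ⟨m, hm⟩ := b1 x R
    obtain ⟨k, hk⟩ := b2 x R
    refine ⟨|m| + |k| + 1, fun y hy hd => ?_⟩
    have a := hm y hy hd
    have b := hk y hy hd
    have c := hp y hy
    have d := neg_abs_le m
    have e := neg_abs_le k
    have d' := abs_nonneg m
    have e' := abs_nonneg k
    rw [abs_lt]
    constructor <;> linarith
  exact ⟨key u fun x hx => ⟨le_rfl, huv x hx⟩, key v fun x hx => ⟨huv x hx, le_rfl⟩,
    fun x hx => ⟨huv x hx, (e1 x hx).1, (e2 x hx).2, (e1 x hx).2⟩⟩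

lemma L_le_I {n : ℕ} {D Om : Set (Pt n)} (hDO : D ⊆ Om) (hd : Om ⊆ closure D) {F p : Pt n → ℝ}
    (hF : BB Om F) (hp : BB Om p) (h : ∀ x ∈ Om, Ilow D Om F x ≤ p x) {x : Pt n} (hx : x ∈ Om) :
    Ilow D Om F x ≤ Ilow Om Om p x := by
  refine le_of_forall_lt_imp_le_of_dense fun c hc => ?_
  obtain ⟨δ, hδ, H⟩ := of_lt_Ilow hF hc
  refine le_Ilow subset_rfl hp (subset_closure hx) (half_pos hδ) fun z hz hzd _ => ?_
  refine le_trans ?_ (h z hz)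
  refine le_Ilow hDO hF (hd hz) (half_pos hδ) fun y hy hyd hD => (H y hy ?_ hD).le
  have := norm_add_le (y - z) (z - x)
  rw [sub_add_sub_cancel] at this
  linarith

lemma I_le_L {n : ℕ} {D Om : Set (Pt n)} (hDO : D ⊆ Om) (hd : Om ⊆ closure D) {F p : Pt n → ℝ}
    (hF : BB Om F) (hp : BB Om p) (h : ∀ x ∈ D, p x ≤ F x) {x : Pt n} (hx : x ∈ Om) :
    Ilow Om Om p x ≤ Ilow D Om F x := by
  refine le_of_forall_lt_imp_le_of_dense fun c hc => ?_
  obtain ⟨δ, hδ, H⟩ := of_lt_Ilow hp hc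
  exact le_Ilow hDO hF (hd hx) hδ fun y hy hyd hD => (H y hy hyd hy).le.trans (h y hD)

lemma sum_le {n : ℕ} {D Om : Set (Pt n)} (hDO : D ⊆ Om) (hd : Om ⊆ closure D) {a b : Pt n → ℝ}
    (ha : BB Om a) (hb : BB Om b) {x : Pt n} (hx : x ∈ Om)
    (ea : Ilow Om Om a x = a x) (eb : Ilow Om Om b x = b x) :
    a x + b x ≤ Ilow D Om (fun y => a y + b y) x := by
  refine le_of_forall_pos_le_add fun ε hε => ?_
  obtain ⟨δ, hδ, H⟩ := of_lt_Ilow (D := Om) (x := x) (c := a x - ε / 2) ha (by linarith)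
  obtain ⟨η, hη, K⟩ := of_lt_Ilow (D := Om) (x := x) (c := b x - ε / 2) hb (by linarith)
  have : a x + b x - ε ≤ Ilow D Om (fun y => a y + b y) x := by
    refine le_Ilow hDO (ha.add hb) (hd hx) (lt_min hδ hη) fun y hy hyd _ => ?_
    have h1 := H y hy (hyd.trans_le (min_le_left _ _)) hy
    have h2 := K y hy (hyd.trans_le (min_le_right _ _)) hy
    linarith
  linarith

lemma open_dense {n : ℕ} {Om : Set (Pt n)} (hOm : IsOpen Om) {u v : Pt n → ℝ}
    (h : HContPair Om u v) {ε : ℝ} (hε : 0 < ε) :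
    IsOpen ({x | x ∈ Om ∧ v x - u x < ε} ∪ (closure Om)ᶜ) ∧
    Dense ({x | x ∈ Om ∧ v x - u x < ε} ∪ (closure Om)ᶜ) := by
  obtain ⟨bu, bv, H⟩ := h.facts
  constructor
  · refine IsOpen.union ?_ isClosed_closure.isOpen_compl
    rw [Metric.isOpen_iff]
    rintro x ⟨hx, hlt⟩
    obtain ⟨_, e1, e2, _⟩ := H x hx
    obtain ⟨δ, hδ, P⟩ := of_lt_Ilow (D := Om) (x := x) (c := u x - (ε - (v x - u x)) / 2) bu
      (by linarith)
    obtain ⟨η, hη, Q⟩ := of_Shigh_lt (D := Om) (x := x) (c := v x + (ε - (v x - u x)) / 2) bv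
      (by linarith)
    obtain ⟨r, hr, hball⟩ := Metric.isOpen_iff.1 hOm x hx
    refine ⟨min r (min δ η), lt_min hr (lt_min hδ hη), fun y hy => ?_⟩
    rw [Metric.mem_ball, lt_min_iff, lt_min_iff, dist_eq_norm] at hy
    have hyO : y ∈ Om := hball (by rw [Metric.mem_ball, dist_eq_norm]; exact hy.1)
    refine ⟨hyO, ?_⟩
    have := P y hyO hy.2.1 hyO
    have := Q y hyO hy.2.2 hyO
    linarith
  · intro x
    by_cases hx : x ∈ closure Om
    swap
    · exact subset_closure (Or.inr hx)
    refine closure_mono (s := {x | x ∈ Om ∧ v x - u x < ε}) subset_union_left ?_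
    refine closure_minimal ?_ isClosed_closure hx
    intro x hx
    rw [Metric.mem_closure_iff]
    intro r hr
    obtain ⟨_, e1, e2, e3⟩ := H x hx
    obtain ⟨η, hη, Q⟩ := of_Shigh_lt (D := Om) (x := x) (c := v x + ε / 2) bv (by linarith)
    by_contra hcon
    push Not at hcon
    have : v x - ε / 2 ≥ Shigh Om Om u x := by
      rw [Shigh_eq]
      have := le_Ilow (c := -(v x - ε / 2)) subset_rfl bu.neg (subset_closure hx) (lt_min hr hη)
        (fun y hy hyd _ => ?_)
      · linarith
      · have q := Q y hy (hyd.trans_le (min_le_right _ _)) hy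
        by_contra hlt
        have := hcon y ⟨hy, by linarith⟩
        rw [dist_comm, dist_eq_norm] at this
        have := hyd.trans_le (min_le_left _ _)
        linarith
    linarith

theorem stmt16 {n : ℕ} (Om : Set (Pt n)) (hOm : IsOpen Om)
    (u₁ v₁ u₂ v₂ : Pt n → ℝ)
    (h₁ : HContPair Om u₁ v₁) (h₂ : HContPair Om u₂ v₂)
    (D : Set (Pt n)) (hDdef : D = {x | x ∈ Om ∧ u₁ x = v₁ x ∧ u₂ x = v₂ x}) :
    Om ⊆ closure D ∧
    HContPair Om (Ilow D Om (fun x => u₁ x + u₂ x))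
      (Shigh D Om (fun x => v₁ x + v₂ x)) ∧
    (∀ x ∈ Om, u₁ x + u₂ x ≤ Ilow D Om (fun y => u₁ y + u₂ y) x ∧
      Ilow D Om (fun y => u₁ y + u₂ y) x ≤ Shigh D Om (fun y => v₁ y + v₂ y) x ∧
      Shigh D Om (fun y => v₁ y + v₂ y) x ≤ v₁ x + v₂ x) ∧
    ∀ pl pu : Pt n → ℝ, IsOplus Om u₁ v₁ u₂ v₂ pl pu →
      ∀ x ∈ Om, pl x = Ilow D Om (fun y => u₁ y + u₂ y) x ∧
        pu x = Shigh D Om (fun y => v₁ y + v₂ y) x := by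
  obtain ⟨bu₁, bv₁, f₁⟩ := h₁.facts
  obtain ⟨bu₂, bv₂, f₂⟩ := h₂.facts
  have hDO : D ⊆ Om := by rw [hDdef]; exact fun x hx => hx.1
  have hD : ∀ x ∈ D, u₁ x = v₁ x ∧ u₂ x = v₂ x := by rw [hDdef]; exact fun x hx => hx.2
  have hd : Om ⊆ closure D := by
    have hpos : ∀ k : ℕ, (0 : ℝ) < 1 / ((k : ℝ) + 1) := fun k => Nat.one_div_pos_of_nat
    have key := dense_iInter_of_isOpen_nat
      (f := fun k : ℕ => ({x | x ∈ Om ∧ v₁ x - u₁ x < 1 / ((k : ℝ) + 1)} ∪ (closure Om)ᶜ) ∩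
        ({x | x ∈ Om ∧ v₂ x - u₂ x < 1 / ((k : ℝ) + 1)} ∪ (closure Om)ᶜ))
      (fun k => (open_dense hOm h₁ (hpos k)).1.inter (open_dense hOm h₂ (hpos k)).1)
      (fun k => (open_dense hOm h₁ (hpos k)).2.inter_of_isOpen_left
        (open_dense hOm h₂ (hpos k)).2 (open_dense hOm h₁ (hpos k)).1)
    refine (key.open_subset_closure_inter hOm).trans (closure_mono ?_)
    rintro x ⟨hx, hxk⟩
    rw [Set.mem_iInter] at hxk
    have hc : x ∈ closure Om := subset_closure hx
    have hz : ∀ w : ℝ, (∀ k : ℕ, w < 1 / ((k : ℝ) + 1)) → w ≤ 0 := by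
      intro w hw
      by_contra hlt
      obtain ⟨k, hk⟩ := exists_nat_one_div_lt (not_le.1 hlt)
      exact lt_asymm hk (hw k)
    have a := hz (v₁ x - u₁ x) fun k => by
      rcases (hxk k).1 with h | h
      · exact h.2
      · exact absurd hc h
    have b := hz (v₂ x - u₂ x) fun k => by
      rcases (hxk k).2 with h | h
      · exact h.2
      · exact absurd hc h
    rw [hDdef]
    exact ⟨hx, le_antisymm (f₁ x hx).1 (by linarith), le_antisymm (f₂ x hx).1 (by linarith)⟩
  have bU := bu₁.add bu₂
  have bV := bv₁.add bv₂
  set L := Ilow D Om (fun y => u₁ y + u₂ y) with hL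
  set S := Shigh D Om (fun y => v₁ y + v₂ y) with hS
  have hS' : ∀ x, S x = - Ilow D Om (fun y => -(v₁ y + v₂ y)) x := fun x => Shigh_eq _ _ _ _
  have bnd : ∀ x ∈ Om, u₁ x + u₂ x ≤ L x ∧ L x ≤ S x ∧ S x ≤ v₁ x + v₂ x := by
    intro x hx
    obtain ⟨l1, i1, s1, _⟩ := f₁ x hx
    obtain ⟨l2, i2, s2, _⟩ := f₂ x hx
    refine ⟨sum_le hDO hd bu₁ bu₂ hx i1 i2, ?_, ?_⟩
    · by_contra hlt
      push Not at hlt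
      obtain ⟨δ, hδ, P⟩ := of_lt_Ilow (D := D) (x := x) (c := (L x + S x) / 2) bU
        (by rw [← hL]; linarith)
      obtain ⟨η, hη, Q⟩ := of_Shigh_lt (D := D) (x := x) (c := (L x + S x) / 2) bV
        (by rw [← hS]; linarith)
      obtain ⟨y, hy, hyd, hyD⟩ := exists_near hDO (hd hx) (lt_min hδ hη)
      have p := P y hy (hyd.trans_le (min_le_left _ _)) hyD
      have q := Q y hy (hyd.trans_le (min_le_right _ _)) hyD
      have := hD y hyD
      linarith
    · rw [Shigh_eq] at s1 s2
      have := sum_le hDO hd bv₁.neg bv₂.neg hx (by linarith) (by linarith)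
      rw [hS']
      have e : (fun y => -(v₁ y + v₂ y)) = fun y => -v₁ y + -v₂ y := by
        funext y; ring
      rw [e]
      linarith
  have bL : BB Om L := bU.between bV fun x hx =>
    ⟨(bnd x hx).1, (bnd x hx).2.1.trans (bnd x hx).2.2⟩
  have bS : BB Om S := bU.between bV fun x hx =>
    ⟨(bnd x hx).1.trans (bnd x hx).2.1, (bnd x hx).2.2⟩
  have hHC : HContPair Om L S := by
    refine ⟨⟨bL.loc, bS.loc, fun x hx => (bnd x hx).2.1⟩, ?_⟩
    intro p q _ _ hpq x hx
    have bp : BB Om p := bL.between bS fun x hx =>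
      ⟨(hpq x hx).1, (hpq x hx).2.1.trans (hpq x hx).2.2⟩
    have bq : BB Om q := bL.between bS fun x hx =>
      ⟨(hpq x hx).1.trans (hpq x hx).2.1, (hpq x hx).2.2⟩
    refine ⟨le_antisymm ?_ ?_, ?_⟩
    · refine I_le_L hDO hd bU bp (fun y hy => ?_) hx
      have := hpq y (hDO hy)
      have := bnd y (hDO hy)
      have := hD y hy
      linarith
    · exact L_le_I hDO hd bU bp (fun y hy => (hpq y hy).1) hx
    · rw [Shigh_eq, hS', neg_inj]
      refine le_antisymm ?_ ?_
      · refine I_le_L hDO hd bV.neg bq.neg (fun y hy => ?_) hx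
        have := hpq y (hDO hy)
        have := bnd y (hDO hy)
        have := hD y hy
        linarith
      · refine L_le_I hDO hd bV.neg bq.neg (fun y hy => ?_) hx
        have := (hpq y hy).2.2
        rw [hS'] at this
        linarith
  refine ⟨hd, hHC, bnd, ?_⟩
  rintro pl pu ⟨hP, hin⟩ 
  obtain ⟨bl, bu, fP⟩ := hP.facts
  obtain ⟨_, _, fL⟩ := hHC.facts
  have hle : ∀ x ∈ Om, pl x ≤ L x ∧ L x ≤ S x ∧ S x ≤ pu x := by
    intro x hx
    refine ⟨?_, (bnd x hx).2.1, ?_⟩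
    · rw [← (fP x hx).2.1]
      refine I_le_L hDO hd bU bl (fun y hy => ?_) hx
      have := hin y (hDO hy)
      have := hD y hy
      linarith
    · rw [← (fP x hx).2.2.1, Shigh_eq, hS', neg_le_neg_iff]
      refine I_le_L hDO hd bV.neg bu.neg (fun y hy => ?_) hx
      have := hin y (hDO hy)
      have := hD y hy
      linarith
  intro x hx
  have e := hP.2 L S bL.loc bS.loc hle x hx
  exact ⟨e.1.symm.trans (fL x hx).2.1, e.2.symm.trans (fL x hx).2.2.1⟩
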